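/- arXiv:2503.22286 — 7 statements merged into one kernel-verified Lean document; each statement's English description precedes it below -/
import Mathlib

section
/- Let n ≥ 1 and let M be an n×n real symmetric positive definite matrix with spectral condition number κ = κ₂(M). Then (κ^{1/2} + κ^{-1/2})² ≤ 4·K(M); in particular κ₂(M) ≤ 4·K(M). -/
open Matrix

/-- Kaporin's condition number. -/
noncomputable def Kap {n : ℕ} (M : Matrix (Fin n) (Fin n) ℝ) : ℝ :=
  (M.trace / n) ^ n / M.det

/-- The spectral condition number: ratio of the largest to the smallest eigenvalue
(for a real symmetric positive definite matrix, the spectrum is the set of its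
eigenvalues). -/
noncomputable def kappa2 {n : ℕ} (M : Matrix (Fin n) (Fin n) ℝ) : ℝ :=
  sSup (spectrum ℝ M) / sInf (spectrum ℝ M)

/-!
Let `a` and `b` be the largest and smallest eigenvalues. Replacing both of them by their mean
keeps the trace and multiplies the determinant by `((a + b) / 2) ^ 2 / (a * b)`, so AM-GM for the
modified eigenvalues bounds this factor by `K(M)`. With `κ = a / b`, four times the factor is
`(a + b) ^ 2 / (a * b) = (κ^{1/2} + κ^{-1/2})²`.
-/

section MeanInequalities

open Finset

variable {ι : Type*} {s : Finset ι} {f : ι → ℝ}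

theorem prod_le_sum_div_card_pow_card (hf : ∀ i ∈ s, 0 ≤ f i) :
    ∏ i ∈ s, f i ≤ ((∑ i ∈ s, f i) / #s) ^ #s := by
  rcases s.eq_empty_or_nonempty with rfl | hs
  · simp
  have hprod : 0 ≤ ∏ i ∈ s, f i := prod_nonneg hf
  have amgm : (∏ i ∈ s, f i) ^ (#s : ℝ)⁻¹ ≤ (∑ i ∈ s, f i) / #s := by
    simpa using Real.geom_mean_le_arith_mean s (fun _ ↦ 1) f (fun _ _ ↦ zero_le_one)
      (by simpa using hs) hf
  calc ∏ i ∈ s, f i = ((∏ i ∈ s, f i) ^ (#s : ℝ)⁻¹) ^ #s :=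
        (Real.rpow_inv_natCast_pow hprod hs.card_ne_zero).symm
    _ ≤ ((∑ i ∈ s, f i) / #s) ^ #s := by gcongr

theorem sum_div_card_pow_card_mul_prod_sdiff_le [DecidableEq ι] {t : Finset ι} (hts : t ⊆ s)
    (hf : ∀ i ∈ s, 0 ≤ f i) :
    ((∑ i ∈ t, f i) / #t) ^ #t * ∏ i ∈ s \ t, f i ≤ ((∑ i ∈ s, f i) / #s) ^ #s := by
  set m : ℝ := (∑ i ∈ t, f i) / #t
  let g : ι → ℝ := t.piecewise (fun _ ↦ m) f
  have hm_nonneg : 0 ≤ m := div_nonneg (sum_nonneg fun i hi ↦ hf i (hts hi)) (Nat.cast_nonneg _)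
  have hg_nonneg : ∀ i ∈ s, 0 ≤ g i := fun i hi ↦
    t.piecewise_cases _ f (0 ≤ ·) hm_nonneg (hf i hi)
  have card_mul_m : #t * m = ∑ i ∈ t, f i := by
    rcases t.eq_empty_or_nonempty with rfl | ht
    · simp
    · exact mul_div_cancel₀ _ (Nat.cast_ne_zero.2 ht.card_ne_zero)
  have sum_g : ∑ i ∈ s, g i = ∑ i ∈ s, f i := by
    rw [sum_piecewise, inter_eq_right.2 hts, sum_const, nsmul_eq_mul, card_mul_m, add_comm,
      sum_sdiff hts]
  have prod_g : ∏ i ∈ s, g i = m ^ #t * ∏ i ∈ s \ t, f i := by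
    rw [prod_piecewise, inter_eq_right.2 hts, prod_const]
  rw [← prod_g, ← sum_g]
  exact prod_le_sum_div_card_pow_card hg_nonneg

theorem add_sq_div_mul_le_sum_div_card_pow_card_div_prod (hf : ∀ k ∈ s, 0 < f k) {i j : ι}
    (hi : i ∈ s) (hj : j ∈ s) :
    (f i + f j) ^ 2 / (f i * f j) ≤ 4 * (((∑ k ∈ s, f k) / #s) ^ #s / ∏ k ∈ s, f k) := by
  classical
  have hfi := hf i hi
  have hfj := hf j hj
  have hprod : 0 < ∏ k ∈ s, f k := prod_pos hf
  have hf_nonneg : ∀ k ∈ s, 0 ≤ f k := fun k hk ↦ (hf k hk).le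
  suffices ((f i + f j) / 2) ^ 2 / (f i * f j) ≤ ((∑ k ∈ s, f k) / #s) ^ #s / ∏ k ∈ s, f k by
    calc (f i + f j) ^ 2 / (f i * f j) = 4 * (((f i + f j) / 2) ^ 2 / (f i * f j)) := by ring
      _ ≤ _ := by gcongr
  rcases eq_or_ne i j with rfl | hij
  · calc ((f i + f i) / 2) ^ 2 / (f i * f i) = 1 := by field_simp; ring
      _ ≤ _ := (one_le_div hprod).2 (prod_le_sum_div_card_pow_card hf_nonneg)
  · have hpair : {i, j} ⊆ s := insert_subset hi (singleton_subset_iff.2 hj)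
    have smoothing : ((f i + f j) / 2) ^ 2 * ∏ k ∈ s \ {i, j}, f k ≤
        ((∑ k ∈ s, f k) / #s) ^ #s := by
      simpa [sum_pair hij, card_pair hij] using
        sum_div_card_pow_card_mul_prod_sdiff_le hpair hf_nonneg
    have prod_split : ∏ k ∈ s, f k = f i * f j * ∏ k ∈ s \ {i, j}, f k := by
      rw [← prod_sdiff hpair, prod_pair hij, mul_comm]
    have hrest : 0 < ∏ k ∈ s \ {i, j}, f k := prod_pos fun k hk ↦ hf k (mem_sdiff.1 hk).1
    calc ((f i + f j) / 2) ^ 2 / (f i * f j)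
        = (((f i + f j) / 2) ^ 2 * ∏ k ∈ s \ {i, j}, f k) / ∏ k ∈ s, f k := by
          rw [prod_split, mul_div_mul_right _ _ hrest.ne']
      _ ≤ _ := by gcongr

end MeanInequalities

theorem sqrt_div_add_inv_sq {a b : ℝ} (ha : 0 < a) (hb : 0 < b) :
    (√(a / b) + (√(a / b))⁻¹) ^ 2 = (a + b) ^ 2 / (a * b) := by
  have hsq : √(a / b) ^ 2 = a / b := Real.sq_sqrt (by positivity)
  have hne : √(a / b) ≠ 0 := by positivity
  calc (√(a / b) + (√(a / b))⁻¹) ^ 2 = √(a / b) ^ 2 + 2 + (√(a / b) ^ 2)⁻¹ := by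
        field_simp; ring
    _ = (a + b) ^ 2 / (a * b) := by rw [hsq]; field_simp; ring

theorem le_sqrt_add_inv_sq (x : ℝ) : x ≤ (√x + (√x)⁻¹) ^ 2 :=
  (Real.sqrt_le_left (by positivity)).1 (le_add_of_nonneg_right (by positivity))

section Eigenvalues

variable {n : ℕ} {M : Matrix (Fin n) (Fin n) ℝ}

theorem Kap_eq_eigenvalues (hM : M.IsHermitian) :
    Kap M = ((∑ i, hM.eigenvalues i) / n) ^ n / ∏ i, hM.eigenvalues i := by
  simp [Kap, hM.trace_eq_sum_eigenvalues, hM.det_eq_prod_eigenvalues]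

theorem exists_kappa2_eq_eigenvalues_div [NeZero n] (hM : M.IsHermitian) :
    ∃ i j, kappa2 M = hM.eigenvalues i / hM.eigenvalues j := by
  have hfinite := Set.finite_range hM.eigenvalues
  have hnonempty := Set.range_nonempty hM.eigenvalues
  obtain ⟨i, hi⟩ := hnonempty.csSup_mem hfinite
  obtain ⟨j, hj⟩ := hnonempty.csInf_mem hfinite
  exact ⟨i, j, by rw [kappa2, hM.spectrum_real_eq_range_eigenvalues, hi, hj]⟩

theorem add_sq_div_mul_eigenvalues_le_Kap (hM : M.PosDef) (i j : Fin n) :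
    (hM.isHermitian.eigenvalues i + hM.isHermitian.eigenvalues j) ^ 2 /
      (hM.isHermitian.eigenvalues i * hM.isHermitian.eigenvalues j) ≤ 4 * Kap M := by
  simpa [Kap_eq_eigenvalues hM.isHermitian] using
    add_sq_div_mul_le_sum_div_card_pow_card_div_prod (fun k _ ↦ hM.eigenvalues_pos k)
      (Finset.mem_univ i) (Finset.mem_univ j)

end Eigenvalues

/-- `(κ^{1/2} + κ^{-1/2})² ≤ 4·K(M)`, in particular `κ₂(M) ≤ 4·K(M)`. -/
theorem stmt_3 (n : ℕ) (hn : 1 ≤ n) (M : Matrix (Fin n) (Fin n) ℝ) (hM : M.PosDef)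
    (κ : ℝ) (hκ : κ = kappa2 M) :
    (Real.sqrt κ + (Real.sqrt κ)⁻¹) ^ 2 ≤ 4 * Kap M ∧ kappa2 M ≤ 4 * Kap M := by
  have : NeZero n := ⟨Nat.one_le_iff_ne_zero.1 hn⟩
  obtain ⟨i, j, hij⟩ := exists_kappa2_eq_eigenvalues_div hM.isHermitian
  have main : (√κ + (√κ)⁻¹) ^ 2 ≤ 4 * Kap M := by
    rw [hκ, hij, sqrt_div_add_inv_sq (hM.eigenvalues_pos i) (hM.eigenvalues_pos j)]
    exact add_sq_div_mul_eigenvalues_le_Kap hM i j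
  exact ⟨main, hκ ▸ (le_sqrt_add_inv_sq κ).trans main⟩
end

section
/- Let n ≥ 1, let (u_1,…,u_n) and (v_1,…,v_n) be orthonormal bases of ℝⁿ, let ξ_1,…,ξ_n > 0 and ω_1,…,ω_n > 0, and set A = Σ_i ξ_i·u_i·u_iᵀ and P = Σ_j ω_j·v_j·v_jᵀ. Then D_LD(A,P) = Σ_{i=1}^n Σ_{j=1}^n ⟨u_i, v_j⟩² · ( ξ_i/ω_j − ln(ξ_i/ω_j) − 1 ). -/
open Matrix

/-- Bregman log determinant divergence. -/
noncomputable def DLD {n : ℕ} (A P : Matrix (Fin n) (Fin n) ℝ) : ℝ :=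
  (A * P⁻¹).trace - Real.log (A * P⁻¹).det - n

/-!
Both `P⁻¹ = ∑ j, (ω j)⁻¹ • v j (v j)ᵀ` and `det A = ∏ i, ξ i` are read off the spectral
expansions, and expanding the trace of `A * P⁻¹` produces the weights `⟨u i, v j⟩ ^ 2`. By Parseval
these weights form a doubly stochastic matrix, so summing `log (ξ i) + 1 - log (ω j)` against them
gives `log (det A) + n - log (det P)`, which accounts for the remaining terms of the divergence.
-/

section RankOneSums

variable {ι κ m R : Type*} [Fintype ι] [Fintype κ] [CommSemiring R]

theorem sum_smul_vecMulVec_self_eq_transpose_mul_diagonal_mul [DecidableEq ι]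
    (u : ι → m → R) (ξ : ι → R) :
    ∑ i, ξ i • vecMulVec (u i) (u i) = (of u)ᵀ * diagonal ξ * of u := by
  ext a b
  rw [mul_apply]
  simp only [Matrix.sum_apply, Matrix.smul_apply, vecMulVec_apply, smul_eq_mul, mul_diagonal,
    transpose_apply, of_apply]
  exact Finset.sum_congr rfl fun i _ => by ring

theorem sum_smul_vecMulVec_self_mul_sum_smul_vecMulVec_self [Fintype m]
    (u : ι → m → R) (v : κ → m → R) (ξ : ι → R) (η : κ → R) :
    (∑ i, ξ i • vecMulVec (u i) (u i)) * ∑ j, η j • vecMulVec (v j) (v j) =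
      ∑ i, ∑ j, (ξ i * η j * (u i ⬝ᵥ v j)) • vecMulVec (u i) (v j) := by
  simp only [Finset.sum_mul_sum, smul_mul_smul_comm, vecMulVec_mul_vecMulVec, vecMulVec_smul,
    smul_smul]

theorem trace_sum_smul_vecMulVec_self_mul_sum_smul_vecMulVec_self [Fintype m]
    (u : ι → m → R) (v : κ → m → R) (ξ : ι → R) (η : κ → R) :
    ((∑ i, ξ i • vecMulVec (u i) (u i)) * ∑ j, η j • vecMulVec (v j) (v j)).trace =
      ∑ i, ∑ j, (u i ⬝ᵥ v j) ^ 2 * (ξ i * η j) := by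
  simp only [sum_smul_vecMulVec_self_mul_sum_smul_vecMulVec_self, trace_sum, trace_smul,
    trace_vecMulVec, smul_eq_mul]
  exact Finset.sum_congr rfl fun i _ => Finset.sum_congr rfl fun j _ => by ring

end RankOneSums

section OrthonormalBasis

variable {m R : Type*} [Fintype m] [DecidableEq m] [CommRing R] {u : m → m → R}

theorem of_mul_transpose_of_eq_one (hu : ∀ i j, u i ⬝ᵥ u j = if i = j then 1 else 0) :
    of u * (of u)ᵀ = 1 :=
  Matrix.ext fun i j => (hu i j).trans (one_apply (i := i) (j := j)).symm

theorem sum_vecMulVec_self_eq_one (hu : ∀ i j, u i ⬝ᵥ u j = if i = j then 1 else 0) :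
    ∑ i, vecMulVec (u i) (u i) = 1 := by
  have hexpand := sum_smul_vecMulVec_self_eq_transpose_mul_diagonal_mul u 1
  simp only [Pi.one_apply, one_smul, Pi.one_def, diagonal_one, Matrix.mul_one] at hexpand
  rw [hexpand, mul_eq_one_comm.mp (of_mul_transpose_of_eq_one hu)]

theorem sum_sq_dotProduct_eq_dotProduct_self
    (hu : ∀ i j, u i ⬝ᵥ u j = if i = j then 1 else 0) (x : m → R) :
    ∑ i, (x ⬝ᵥ u i) ^ 2 = x ⬝ᵥ x := by
  calc ∑ i, (x ⬝ᵥ u i) ^ 2 = x ⬝ᵥ ((∑ i, vecMulVec (u i) (u i)) *ᵥ x) := by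
        simp [sum_mulVec, vecMulVec_mulVec, dotProduct_sum, dotProduct_comm, sq]
    _ = x ⬝ᵥ x := by rw [sum_vecMulVec_self_eq_one hu, one_mulVec]

theorem det_sum_smul_vecMulVec_self (hu : ∀ i j, u i ⬝ᵥ u j = if i = j then 1 else 0)
    (ξ : m → R) : (∑ i, ξ i • vecMulVec (u i) (u i)).det = ∏ i, ξ i := by
  rw [sum_smul_vecMulVec_self_eq_transpose_mul_diagonal_mul, det_mul_right_comm, det_mul,
    mul_eq_one_comm.mp (of_mul_transpose_of_eq_one hu), det_one, one_mul, det_diagonal]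

theorem inv_sum_smul_vecMulVec_self {K : Type*} [Field K] {v : m → m → K}
    (hv : ∀ i j, v i ⬝ᵥ v j = if i = j then 1 else 0) {ω : m → K} (hω : ∀ j, ω j ≠ 0) :
    (∑ j, ω j • vecMulVec (v j) (v j))⁻¹ = ∑ j, (ω j)⁻¹ • vecMulVec (v j) (v j) := by
  apply inv_eq_right_inv
  rw [sum_smul_vecMulVec_self_mul_sum_smul_vecMulVec_self]
  simp [hv, hω, ite_smul, sum_vecMulVec_self_eq_one hv]

end OrthonormalBasis

section DoublyStochastic

variable {m R : Type*} [Fintype m] [DecidableEq m]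

theorem sq_dotProduct_mem_doublyStochastic [CommRing R] [LinearOrder R] [IsStrictOrderedRing R]
    {u v : m → m → R} (hu : ∀ i j, u i ⬝ᵥ u j = if i = j then 1 else 0)
    (hv : ∀ i j, v i ⬝ᵥ v j = if i = j then 1 else 0) :
    (of fun i j => (u i ⬝ᵥ v j) ^ 2) ∈ doublyStochastic R m := by
  refine mem_doublyStochastic_iff_sum.mpr
    ⟨fun i j => sq_nonneg (u i ⬝ᵥ v j), fun i => ?_, fun j => ?_⟩
  · simp [sum_sq_dotProduct_eq_dotProduct_self hv, hu]
  · simp [dotProduct_comm _ (v j), sum_sq_dotProduct_eq_dotProduct_self hu, hv]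

theorem sum_sum_mul_sub_of_mem_doublyStochastic [Ring R] [PartialOrder R] [IsOrderedRing R]
    {W : Matrix m m R} (hW : W ∈ doublyStochastic R m) (a b : m → R) :
    ∑ i, ∑ j, W i j * (a i - b j) = ∑ i, a i - ∑ j, b j := by
  simp only [mul_sub, Finset.sum_sub_distrib]
  rw [Finset.sum_comm (f := fun i j => W i j * b j)]
  simp only [← Finset.sum_mul, sum_row_of_mem_doublyStochastic hW,
    sum_col_of_mem_doublyStochastic hW, one_mul]

end DoublyStochastic

theorem log_det_mul_inv_sum_smul_vecMulVec_self {m : Type*} [Fintype m] [DecidableEq m]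
    {u v : m → m → ℝ} {ξ ω : m → ℝ} (hu : ∀ i j, u i ⬝ᵥ u j = if i = j then 1 else 0)
    (hv : ∀ i j, v i ⬝ᵥ v j = if i = j then 1 else 0) (hξ : ∀ i, ξ i ≠ 0) (hω : ∀ j, ω j ≠ 0) :
    Real.log ((∑ i, ξ i • vecMulVec (u i) (u i)) *
        (∑ j, ω j • vecMulVec (v j) (v j))⁻¹).det =
      ∑ i, Real.log (ξ i) - ∑ j, Real.log (ω j) := by
  rw [inv_sum_smul_vecMulVec_self hv hω, det_mul, det_sum_smul_vecMulVec_self hu,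
    det_sum_smul_vecMulVec_self hv, Finset.prod_inv_distrib, ← div_eq_mul_inv,
    Real.log_div (Finset.prod_ne_zero_iff.mpr fun i _ => hξ i)
      (Finset.prod_ne_zero_iff.mpr fun j _ => hω j),
    Real.log_prod fun i _ => hξ i, Real.log_prod fun j _ => hω j]

/-- spectral expansion of the Bregman log determinant divergence. -/
theorem stmt_5 (n : ℕ) (hn : 1 ≤ n) (u v : Fin n → (Fin n → ℝ)) (ξ ω : Fin n → ℝ)
    (hu : ∀ i j, u i ⬝ᵥ u j = if i = j then (1 : ℝ) else 0)
    (hv : ∀ i j, v i ⬝ᵥ v j = if i = j then (1 : ℝ) else 0)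
    (hξ : ∀ i, 0 < ξ i) (hω : ∀ j, 0 < ω j) :
    DLD (∑ i, ξ i • vecMulVec (u i) (u i)) (∑ j, ω j • vecMulVec (v j) (v j)) =
      ∑ i, ∑ j, (u i ⬝ᵥ v j) ^ 2 * (ξ i / ω j - Real.log (ξ i / ω j) - 1) := by
  have hξ₀ : ∀ i, ξ i ≠ 0 := fun i => (hξ i).ne'
  have hω₀ : ∀ j, ω j ≠ 0 := fun j => (hω j).ne'
  have hlog : ∑ i, ∑ j, (u i ⬝ᵥ v j) ^ 2 * (Real.log (ξ i) + 1 - Real.log (ω j)) =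
      ∑ i, Real.log (ξ i) + n - ∑ j, Real.log (ω j) := by
    simpa [Finset.sum_add_distrib] using sum_sum_mul_sub_of_mem_doublyStochastic
      (sq_dotProduct_mem_doublyStochastic hu hv)
      (fun i => Real.log (ξ i) + 1) fun j => Real.log (ω j)
  calc DLD (∑ i, ξ i • vecMulVec (u i) (u i)) (∑ j, ω j • vecMulVec (v j) (v j))
      = ∑ i, ∑ j, (u i ⬝ᵥ v j) ^ 2 * (ξ i * (ω j)⁻¹) -
          ∑ i, ∑ j, (u i ⬝ᵥ v j) ^ 2 * (Real.log (ξ i) + 1 - Real.log (ω j)) := by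
        rw [DLD, log_det_mul_inv_sum_smul_vecMulVec_self hu hv hξ₀ hω₀,
          inv_sum_smul_vecMulVec_self hv hω₀,
          trace_sum_smul_vecMulVec_self_mul_sum_smul_vecMulVec_self, hlog]
        ring
    _ = ∑ i, ∑ j, (u i ⬝ᵥ v j) ^ 2 * (ξ i / ω j - Real.log (ξ i / ω j) - 1) := by
        simp only [← Finset.sum_sub_distrib, Real.log_div (hξ₀ _) (hω₀ _)]
        exact Finset.sum_congr rfl fun i _ => Finset.sum_congr rfl fun j _ => by ring
end

section
/- Let 1 ≤ r < n, let Q be an invertible n×n real matrix, let Ẽ be an n×n real symmetric matrix with I + Ẽ positive definite, and set A = Q·(I+Ẽ)·Qᵀ. Let V be a real n×r matrix with Vᵀ·V = I_r, and let D be a real r×r diagonal matrix with Ẽ·V = V·D. For α > 0 define P_α = Q·( α·(I − V·Vᵀ) + V·(I_r + D)·Vᵀ )·Qᵀ, which is positive definite. Then α* := trace( (I+Ẽ)·(I − V·Vᵀ) ) / (n − r) is positive, and α* is the unique minimiser over α > 0 of the function α ↦ D_LD(A, P_α); that is, D_LD(A, P_α) > D_LD(A, P_{α*}) for every α > 0 with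 α ≠ α*. -/
open Matrix

/-!
Congruence by `Q` does not change the divergence, so take `Q = 1` and write `B = I + Ẽ`,
`W = I - V Vᵀ` and `S = I_r + D = Vᵀ B V`, which is positive definite. The matrix `α W + V S Vᵀ`
acts as `S` on the range of `V` and as `α` on its orthogonal complement, so its inverse is
`α⁻¹ W + V S⁻¹ Vᵀ` and its determinant is `α ^ (n - r) * det S`. Hence the divergence is
`trace (B W) / α + (n - r) log α` up to a constant, and `log x < x - 1` for `x ≠ 1`, applied to
`x = α* / α`, shows that this is smallest exactly at `α* = trace (B W) / (n - r)`.
-/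

section PosDef

variable {𝕜 ι κ : Type*} [RCLike 𝕜] [Fintype ι] [Fintype κ]

open scoped ComplexOrder

theorem trace_conjTranspose_mul_mul_pos {B : Matrix ι ι 𝕜} (hB : B.PosDef)
    {C : Matrix ι κ 𝕜} (hC : C ≠ 0) : 0 < (Cᴴ * B * C).trace := by
  obtain ⟨j, hj⟩ : ∃ j, C.col j ≠ 0 := by
    contrapose! hC
    ext i j
    exact congrFun (hC j) i
  have diag_eq (k : κ) : (Cᴴ * B * C) k k = star (C.col k) ⬝ᵥ (B *ᵥ C.col k) := by
    rw [Matrix.mul_assoc]; rfl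
  simp only [trace, diag_apply, diag_eq]
  exact Finset.sum_pos' (fun k _ => hB.posSemidef.dotProduct_mulVec_nonneg _)
    ⟨j, Finset.mem_univ j, hB.dotProduct_mulVec_pos hj⟩

theorem trace_mul_pos_of_isHermitian_of_isIdempotentElem {B W : Matrix ι ι 𝕜} (hB : B.PosDef)
    (hW : W.IsHermitian) (hidem : IsIdempotentElem W) (hne : W ≠ 0) : 0 < (B * W).trace := by
  have trace_eq : (Wᴴ * B * W).trace = (B * W).trace := by
    rw [hW.eq, Matrix.mul_assoc, trace_mul_comm, Matrix.mul_assoc, hidem.eq]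
  exact trace_eq ▸ trace_conjTranspose_mul_mul_pos hB hne

theorem posDef_of_mul_eq_mul [DecidableEq κ] {B : Matrix ι ι 𝕜} (hB : B.PosDef)
    {V : Matrix ι κ 𝕜} (hV : Vᴴ * V = 1) {S : Matrix κ κ 𝕜} (hBV : B * V = V * S) :
    S.PosDef := by
  have compression_eq : Vᴴ * B * V = S := by
    rw [Matrix.mul_assoc, hBV, ← Matrix.mul_assoc, hV, Matrix.one_mul]
  have hinj : Function.Injective V.mulVec :=
    Function.LeftInverse.injective (g := Vᴴ.mulVec) fun x => by
      rw [mulVec_mulVec, hV, one_mulVec]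
  exact compression_eq ▸ hB.conjTranspose_mul_mul_same hinj

end PosDef

section ScaledExtension

variable {R ι κ : Type*} [CommRing R] [Fintype κ] [DecidableEq ι]

/-- The matrix `α (1 - V U) + V S U`. When `U V = 1`, so that `V U` is a projection, this is the
extension of `S`, viewed as an operator on the range of `V`, by the scalar `α` on the kernel of `U`.
The preconditioners `P_α` are the congruences by `Q` of such matrices with `U = Vᵀ`. -/
def scaledExtension (V : Matrix ι κ R) (U : Matrix κ ι R) (α : R) (S : Matrix κ κ R) :
    Matrix ι ι R :=
  α • (1 - V * U) + V * S * U

variable [Fintype ι] [DecidableEq κ] {V : Matrix ι κ R} {U : Matrix κ ι R}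

theorem isIdempotentElem_one_sub_mul (hUV : U * V = 1) : IsIdempotentElem (1 - V * U) := by
  refine IsIdempotentElem.one_sub ?_
  rw [IsIdempotentElem, Matrix.mul_assoc, ← Matrix.mul_assoc U, hUV, Matrix.one_mul]

theorem trace_one_sub_mul (hUV : U * V = 1) :
    (1 - V * U).trace = (Fintype.card ι : R) - Fintype.card κ := by
  rw [trace_sub, trace_mul_comm, hUV, trace_one, trace_one]

theorem scaledExtension_mul_scaledExtension (hUV : U * V = 1) (α β : R) (S T : Matrix κ κ R) :
    scaledExtension V U α S * scaledExtension V U β T = scaledExtension V U (α * β) (S * T) := by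
  have compl_mul_left : (1 - V * U) * (V * T * U) = 0 := by
    simp only [Matrix.sub_mul, Matrix.one_mul, Matrix.mul_assoc, ← Matrix.mul_assoc U V, hUV,
      sub_self]
  have compl_mul_right : V * S * U * (1 - V * U) = 0 := by
    simp only [Matrix.mul_sub, Matrix.mul_one, Matrix.mul_assoc, ← Matrix.mul_assoc U V, hUV,
      Matrix.one_mul, sub_self]
  have range_mul : V * S * U * (V * T * U) = V * (S * T) * U := by
    simp only [Matrix.mul_assoc, ← Matrix.mul_assoc U V, hUV, Matrix.one_mul]
  simp only [scaledExtension, Matrix.add_mul, Matrix.mul_add, Matrix.smul_mul, Matrix.mul_smul,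
    (isIdempotentElem_one_sub_mul hUV).eq, compl_mul_left, compl_mul_right, range_mul, smul_smul,
    smul_zero, add_zero, zero_add, mul_comm β α]

-- `α - V (α - S) U` and `α - (α - S) U V = S` are the characteristic matrices at `α` of two
-- products that differ by the order of their factors.
theorem pow_card_mul_det_scaledExtension (hUV : U * V = 1) (α : R) (S : Matrix κ κ R) :
    α ^ Fintype.card κ * (scaledExtension V U α S).det = α ^ Fintype.card ι * S.det := by
  have extension_eq : scalar ι α - V * ((scalar κ α - S) * U) = scaledExtension V U α S := by
    simp only [scaledExtension, scalar_apply, ← smul_one_eq_diagonal, Matrix.sub_mul,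
      Matrix.mul_sub, Matrix.smul_mul, Matrix.mul_smul, Matrix.one_mul, smul_sub, Matrix.mul_assoc]
    abel
  have block_eq : scalar κ α - (scalar κ α - S) * U * V = S := by
    rw [Matrix.mul_assoc, hUV, Matrix.mul_one, sub_sub_cancel]
  have charpoly_eq :=
    congrArg (Polynomial.eval α) (charpoly_mul_comm' V ((scalar κ α - S) * U))
  simpa only [Polynomial.eval_mul, Polynomial.eval_pow, Polynomial.eval_X, eval_charpoly,
    extension_eq, block_eq] using charpoly_eq

end ScaledExtension

theorem inv_scaledExtension {K ι κ : Type*} [Field K] [Fintype ι] [DecidableEq ι] [Fintype κ]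
    [DecidableEq κ] {V : Matrix ι κ K} {U : Matrix κ ι K} (hUV : U * V = 1) {α : K} (hα : α ≠ 0)
    {S : Matrix κ κ K} (hS : IsUnit S.det) :
    (scaledExtension V U α S)⁻¹ = scaledExtension V U α⁻¹ S⁻¹ := by
  refine inv_eq_right_inv ?_
  rw [scaledExtension_mul_scaledExtension hUV, mul_inv_cancel₀ hα, mul_nonsing_inv S hS,
    scaledExtension, one_smul, Matrix.mul_one, sub_add_cancel]

theorem div_add_mul_log_lt_of_ne {t c x : ℝ} (ht : 0 < t) (hc : 0 < c) (hx : 0 < x)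
    (hne : x ≠ t / c) : t / (t / c) + c * Real.log (t / c) < t / x + c * Real.log x := by
  have hmin : 0 < t / c := div_pos ht hc
  have log_lt : Real.log (t / c / x) < t / c / x - 1 :=
    Real.log_lt_sub_one_of_pos (div_pos hmin hx) fun h => hne ((div_eq_one_iff_eq hx.ne').1 h).symm
  rw [Real.log_div hmin.ne' hx.ne'] at log_lt
  calc t / (t / c) + c * Real.log (t / c)
      = c * (Real.log (t / c) - Real.log x) + c + c * Real.log x := by
        rw [div_div_cancel₀ ht.ne']; ring
    _ < c * (t / c / x - 1) + c + c * Real.log x := by gcongr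
    _ = t / x + c * Real.log x := by field_simp; ring

section Divergence

variable {n : ℕ}

theorem DLD_congruence {Q : Matrix (Fin n) (Fin n) ℝ} (hQ : IsUnit Q.det)
    (A P : Matrix (Fin n) (Fin n) ℝ) : DLD (Q * A * Qᵀ) (Q * P * Qᵀ) = DLD A P := by
  have hQT : IsUnit Qᵀ.det := by rwa [det_transpose]
  have similar : Q * A * Qᵀ * (Q * P * Qᵀ)⁻¹ = Q * (A * P⁻¹) * Q⁻¹ := by
    rw [Matrix.mul_inv_rev, Matrix.mul_inv_rev, ← Matrix.mul_assoc,
      mul_nonsing_inv_cancel_right _ _ hQT]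
    simp only [Matrix.mul_assoc]
  have trace_eq : (Q * (A * P⁻¹) * Q⁻¹).trace = (A * P⁻¹).trace := by
    rw [trace_mul_comm, nonsing_inv_mul_cancel_left _ _ hQ]
  rw [DLD, DLD, similar, trace_eq, det_conj ((isUnit_iff_isUnit_det Q).2 hQ)]

variable {κ : Type*} [Fintype κ] [DecidableEq κ]

theorem DLD_scaledExtension {B : Matrix (Fin n) (Fin n) ℝ} (hB : B.det ≠ 0)
    {V : Matrix (Fin n) κ ℝ} {U : Matrix κ (Fin n) ℝ} (hUV : U * V = 1) {α : ℝ} (hα : α ≠ 0)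
    {S : Matrix κ κ ℝ} (hS : S.det ≠ 0) :
    DLD B (scaledExtension V U α S) =
      (B * (1 - V * U)).trace / α + ((n : ℝ) - Fintype.card κ) * Real.log α +
        ((B * (V * S⁻¹ * U)).trace + Real.log S.det - Real.log B.det - n) := by
  have trace_eq : (B * (scaledExtension V U α S)⁻¹).trace =
      (B * (1 - V * U)).trace / α + (B * (V * S⁻¹ * U)).trace := by
    rw [inv_scaledExtension hUV hα hS.isUnit, scaledExtension, Matrix.mul_add, Matrix.mul_smul,
      trace_add, trace_smul, smul_eq_mul, div_eq_inv_mul]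
  have det_eq : α ^ Fintype.card κ * (scaledExtension V U α S).det = α ^ n * S.det := by
    simpa only [Fintype.card_fin] using pow_card_mul_det_scaledExtension hUV α S
  have det_ne : (scaledExtension V U α S).det ≠ 0 :=
    right_ne_zero_of_mul (det_eq ▸ mul_ne_zero (pow_ne_zero n hα) hS)
  have log_det_eq : Fintype.card κ * Real.log α + Real.log (scaledExtension V U α S).det =
      n * Real.log α + Real.log S.det := by
    simpa only [Real.log_mul (pow_ne_zero _ hα) det_ne, Real.log_mul (pow_ne_zero _ hα) hS,
      Real.log_pow] using congrArg Real.log det_eq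
  rw [DLD, trace_eq, det_mul, det_nonsing_inv, Ring.inverse_eq_inv',
    Real.log_mul hB (inv_ne_zero det_ne), Real.log_inv]
  linarith

theorem stmt_9_general (hκ : Fintype.card κ < n) {Q B : Matrix (Fin n) (Fin n) ℝ}
    (hQ : IsUnit Q.det) (hB : B.PosDef) {V : Matrix (Fin n) κ ℝ} (hV : Vᵀ * V = 1)
    {S : Matrix κ κ ℝ} (hS : S.PosDef) {αstar : ℝ}
    (hαstar : αstar = (B * (1 - V * Vᵀ)).trace / ((n : ℝ) - Fintype.card κ)) :
    0 < αstar ∧ ∀ α : ℝ, 0 < α → α ≠ αstar →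
      DLD (Q * B * Qᵀ) (Q * scaledExtension V Vᵀ αstar S * Qᵀ) <
        DLD (Q * B * Qᵀ) (Q * scaledExtension V Vᵀ α S * Qᵀ) := by
  subst hαstar
  have codim_pos : (0 : ℝ) < n - Fintype.card κ := sub_pos.2 (Nat.cast_lt.2 hκ)
  have compl_isHermitian : (1 - V * Vᵀ).IsHermitian :=
    isHermitian_one.sub (isHermitian_mul_conjTranspose_self V)
  have compl_ne_zero : 1 - V * Vᵀ ≠ 0 := fun h => codim_pos.ne <| by
    simpa only [h, trace_zero, Fintype.card_fin] using trace_one_sub_mul hV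
  have trace_pos : 0 < (B * (1 - V * Vᵀ)).trace :=
    trace_mul_pos_of_isHermitian_of_isIdempotentElem hB compl_isHermitian
      (isIdempotentElem_one_sub_mul hV) compl_ne_zero
  have αstar_pos := div_pos trace_pos codim_pos
  refine ⟨αstar_pos, fun α hα hne => ?_⟩
  have detB := hB.det_pos.ne'
  have detS := hS.det_pos.ne'
  rw [DLD_congruence hQ, DLD_congruence hQ, DLD_scaledExtension detB hV αstar_pos.ne' detS,
    DLD_scaledExtension detB hV hα.ne' detS]
  exact add_lt_add_left (div_add_mul_log_lt_of_ne trace_pos codim_pos hα hne) _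

end Divergence

/-- the scaling `α* = trace((I+Ẽ)(I−VVᵀ))/(n−r)` is positive and is
the unique minimiser over `α > 0` of `α ↦ D_LD(A, P_α)`. -/
theorem stmt_9 (n r : ℕ) (hr : 1 ≤ r) (hrn : r < n)
    (Q E : Matrix (Fin n) (Fin n) ℝ) (hQ : IsUnit Q.det)
    (hEsymm : E.IsSymm) (hEpd : (1 + E).PosDef)
    (A : Matrix (Fin n) (Fin n) ℝ) (hA : A = Q * (1 + E) * Qᵀ)
    (V : Matrix (Fin n) (Fin r) ℝ) (hV : Vᵀ * V = 1)
    (d : Fin r → ℝ) (hVD : E * V = V * diagonal d)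
    (P : ℝ → Matrix (Fin n) (Fin n) ℝ)
    (hP : ∀ α : ℝ, P α = Q * (α • (1 - V * Vᵀ) + V * (1 + diagonal d) * Vᵀ) * Qᵀ)
    (αstar : ℝ) (hαstar : αstar = ((1 + E) * (1 - V * Vᵀ)).trace / ((n : ℝ) - r)) :
    0 < αstar ∧
    ∀ α : ℝ, 0 < α → α ≠ αstar → DLD A (P αstar) < DLD A (P α) := by
  have eigen : (1 + E) * V = V * (1 + diagonal d) := by
    rw [Matrix.add_mul, hVD, Matrix.one_mul, Matrix.mul_add, Matrix.mul_one]
  simp only [hA, hP]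
  exact stmt_9_general (by simpa using hrn) hQ hEpd hV (posDef_of_mul_eq_mul hEpd hV eigen)
    (by simpa using hαstar)
end

section
/- Let 1 ≤ r < n, let Q be an invertible n×n real matrix, let Ẽ be an n×n real symmetric matrix with I + Ẽ positive definite, and set A = Q·(I+Ẽ)·Qᵀ and P = Q·(I + V·D·Vᵀ)·Qᵀ, where V is a real n×r matrix with Vᵀ·V = I_r and D is a real r×r diagonal matrix with Ẽ·V = V·D. Then trace( (I+Ẽ)·(I − V·Vᵀ) ) = trace(P⁻¹·A) − r. -/
open Matrix

/-!
The preconditioner `N = 1 + V D U`, with `U = Vᵀ` or any other left inverse of `V`, agrees with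
`1 + E` on the range of `V` and satisfies `(1 - V U) N = 1 - V U`. Hence `N⁻¹ (1 + E)` fixes `V`,
so its compression by the projection `V U` contributes the rank `r` to the trace, while by
cyclicity the compression by `1 - V U` does not see `N⁻¹` at all. The outer factors `Q` and `Qᵀ`
only conjugate `N⁻¹ (1 + E)`.
-/

section

variable {m n R : Type*} [Fintype m] [DecidableEq m] [Fintype n] [DecidableEq n]

theorem one_add_mul_mul_mul_of_mul_eq_one [Semiring R] {V : Matrix n m R} {U : Matrix m n R}
    (hUV : U * V = 1) (D : Matrix m m R) :
    (1 + V * D * U) * V = V * (1 + D) := by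
  rw [Matrix.add_mul, Matrix.one_mul, Matrix.mul_assoc, hUV, Matrix.mul_one, Matrix.mul_add,
    Matrix.mul_one]

theorem one_sub_mul_mul_one_add_mul_mul_of_mul_eq_one [Ring R] {V : Matrix n m R}
    {U : Matrix m n R} (hUV : U * V = 1) (D : Matrix m m R) :
    (1 - V * U) * (1 + V * D * U) = 1 - V * U := by
  have annihilates : (1 - V * U) * V = 0 := by
    rw [Matrix.sub_mul, Matrix.one_mul, Matrix.mul_assoc, hUV, Matrix.mul_one, sub_self]
  rw [Matrix.mul_add, Matrix.mul_one, ← Matrix.mul_assoc, ← Matrix.mul_assoc, annihilates,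
    Matrix.zero_mul, Matrix.zero_mul, add_zero]

variable [CommRing R]

theorem det_one_add_mul_mul_of_mul_eq_one {V : Matrix n m R} {U : Matrix m n R}
    (hUV : U * V = 1) (D : Matrix m m R) :
    (1 + V * D * U).det = (1 + D).det := by
  rw [Matrix.mul_assoc, det_one_add_mul_comm, Matrix.mul_assoc, hUV, Matrix.mul_one]

theorem isUnit_det_of_mul_eq_mul {V : Matrix n m R} {U : Matrix m n R} (hUV : U * V = 1)
    {M : Matrix n n R} {C : Matrix m m R} (hMV : M * V = V * C) (hM : IsUnit M.det) :
    IsUnit C.det := by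
  refine isUnit_det_of_left_inverse (B := U * M⁻¹ * V) ?_
  rw [Matrix.mul_assoc, ← hMV, Matrix.mul_assoc, nonsing_inv_mul_cancel_left _ _ hM, hUV]

theorem trace_inv_mul_of_mul_mul {Q S : Matrix n n R} (hQ : IsUnit Q.det) (hS : IsUnit S.det)
    (N M : Matrix n n R) :
    ((Q * N * S)⁻¹ * (Q * M * S)).trace = (N⁻¹ * M).trace := by
  have conjugate : (Q * N * S)⁻¹ * (Q * M * S) = S⁻¹ * (N⁻¹ * M * S) := by
    simp only [Matrix.mul_inv_rev, Matrix.mul_assoc, nonsing_inv_mul_cancel_left _ _ hQ]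
  rw [conjugate, trace_mul_comm, mul_nonsing_inv_cancel_right _ _ hS]

theorem trace_inv_mul_eq_trace_mul_one_sub_add_card {V : Matrix n m R} {U : Matrix m n R}
    (hUV : U * V = 1) {N M : Matrix n n R} (hN : IsUnit N.det) (hNV : N * V = M * V)
    (hUN : (1 - V * U) * N = 1 - V * U) :
    (N⁻¹ * M).trace = (M * (1 - V * U)).trace + (Fintype.card m : R) := by
  have fixes : N⁻¹ * M * V = V := by
    rw [Matrix.mul_assoc, ← hNV, nonsing_inv_mul_cancel_left _ _ hN]
  have absorbs : (1 - V * U) * N⁻¹ = 1 - V * U := by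
    nth_rw 1 [← hUN]
    exact mul_nonsing_inv_cancel_right _ _ hN
  have range_part : (N⁻¹ * M * (V * U)).trace = (Fintype.card m : R) := by
    rw [← Matrix.mul_assoc, fixes, trace_mul_comm, hUV, trace_one]
  have complement_part : (N⁻¹ * M * (1 - V * U)).trace = (M * (1 - V * U)).trace := by
    rw [trace_mul_comm, ← Matrix.mul_assoc, absorbs, trace_mul_comm]
  rw [← range_part, ← complement_part, ← trace_add, ← Matrix.mul_add, sub_add_cancel,
    Matrix.mul_one]

theorem stmt_11_general {Q S : Matrix n n R} (hQ : IsUnit Q.det) (hS : IsUnit S.det)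
    {V : Matrix n m R} {U : Matrix m n R} (hUV : U * V = 1)
    {E : Matrix n n R} {D : Matrix m m R} (hEV : E * V = V * D) (hD : IsUnit (1 + D).det) :
    ((1 + E) * (1 - V * U)).trace =
      ((Q * (1 + V * D * U) * S)⁻¹ * (Q * (1 + E) * S)).trace - (Fintype.card m : R) := by
  have hN : IsUnit (1 + V * D * U).det := by rwa [det_one_add_mul_mul_of_mul_eq_one hUV]
  have agree : (1 + V * D * U) * V = (1 + E) * V := by
    rw [one_add_mul_mul_mul_of_mul_eq_one hUV, Matrix.mul_add, Matrix.add_mul, hEV,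
      Matrix.mul_one, Matrix.one_mul]
  rw [trace_inv_mul_of_mul_mul hQ hS, trace_inv_mul_eq_trace_mul_one_sub_add_card hUV hN agree
    (one_sub_mul_mul_one_add_mul_mul_of_mul_eq_one hUV D), add_sub_cancel_right]

end

/-- `trace((I+Ẽ)(I − VVᵀ)) = trace(P⁻¹·A) − r`. -/
theorem stmt_11 (n r : ℕ) (hr : 1 ≤ r) (hrn : r < n)
    (Q E : Matrix (Fin n) (Fin n) ℝ) (hQ : IsUnit Q.det)
    (hEsymm : E.IsSymm) (hEpd : (1 + E).PosDef)
    (A : Matrix (Fin n) (Fin n) ℝ) (hA : A = Q * (1 + E) * Qᵀ)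
    (V : Matrix (Fin n) (Fin r) ℝ) (hV : Vᵀ * V = 1)
    (d : Fin r → ℝ) (hVD : E * V = V * diagonal d)
    (P : Matrix (Fin n) (Fin n) ℝ)
    (hPdef : P = Q * (1 + V * diagonal d * Vᵀ) * Qᵀ) :
    ((1 + E) * (1 - V * Vᵀ)).trace = (P⁻¹ * A).trace - r := by
  have hD : IsUnit (1 + diagonal d).det :=
    isUnit_det_of_mul_eq_mul hV (by simp [Matrix.add_mul, Matrix.mul_add, hVD])
      ((isUnit_iff_isUnit_det _).1 hEpd.isUnit)
  subst hA hPdef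
  simpa only [Fintype.card_fin] using
    stmt_11_general hQ (isUnit_det_transpose Q hQ) hV hVD hD
end

section
/- Let 1 ≤ r < n, let Q be an invertible n×n real matrix, and let Ẽ be an n×n real symmetric matrix with I + Ẽ positive definite whose eigendecomposition is Ẽ = V·D·Vᵀ + W·Θ·Wᵀ, where the n×n matrix [V | W] is orthogonal, V is n×r, W is n×(n−r), and D and Θ are diagonal. Set A = Q·(I+Ẽ)·Qᵀ, and for α > 0 set P_α = Q·( α·(I − V·Vᵀ) + V·(I_r + D)·Vᵀ )·Qᵀ and M_α = S_α⁻¹·A·S_α⁻¹ where S_α is the positive definite square root of P_α. Let λ₁ = max_i (1 + Θ_{ii}) and λ_n = min_i (1 + Θ_{ii}). Then for every α > 0, κ₂(M_α) = max(1, λ₁/α) / min(1, λ_n/α). -/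
open Matrix

/-!
Put `B = Q * [V | W]`. Both `P_α = B * diagonal p * Bᵀ` and `A = B * diagonal q * Bᵀ` are congruent
to diagonal matrices through the same `B`. Since `S⁻¹ * P_α * S⁻¹ = 1`, the matrices `S⁻¹ * B` and
`diagonal p * Bᵀ * S⁻¹` are inverse to each other, and they conjugate `diagonal (q / p)` into
`M_α = S⁻¹ * A * S⁻¹`. The quotients `q / p` are `1` on the columns of `V` and `(1 + Θ_{ii}) / α` on
those of `W`.
-/

theorem range_sumElim_div_sumElim {ι κ G₀ : Type*} [Nonempty ι] [GroupWithZero G₀] {a : ι → G₀}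
    (ha : ∀ i, a i ≠ 0) (b c : κ → G₀) :
    Set.range (Sum.elim a b / Sum.elim a c) = insert 1 (Set.range (b / c)) := by
  have hquot : Sum.elim a b / Sum.elim a c = Sum.elim (fun _ => 1) (b / c) := by
    ext (i | j)
    · exact div_self (ha i)
    · rfl
  rw [hquot, Set.Sum.elim_range, Set.range_const, Set.singleton_union]

section CommRing

variable {m n R : Type*} [Fintype m] [DecidableEq m] [Fintype n] [DecidableEq n] [CommRing R]

theorem spectrum_conj_of_mul_eq_one {L : Matrix m n R} {L' : Matrix n m R}
    (hLL' : L * L' = 1) (hL'L : L' * L = 1) (X : Matrix n n R) :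
    spectrum R (L * X * L') = spectrum R X := by
  ext μ
  have hconj : algebraMap R _ μ - L * X * L' = L * (algebraMap R _ μ - X) * L' := by
    simp only [Algebra.algebraMap_eq_smul_one, Matrix.mul_sub, Matrix.sub_mul, Matrix.mul_smul,
      Matrix.smul_mul, Matrix.mul_one, hLL']
  rw [spectrum.mem_iff, spectrum.mem_iff, isUnit_iff_isUnit_det, isUnit_iff_isUnit_det, hconj,
    det_conj_of_mul_eq_one hLL' hL'L]

theorem isUnit_apply_of_isUnit_mul_diagonal_mul (hcard : Fintype.card m = Fintype.card n)
    {B : Matrix m n R} {C : Matrix n m R} {p : n → R} (h : IsUnit (B * diagonal p * C)) (i : n) :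
    IsUnit (p i) := by
  obtain ⟨Y, hY⟩ := h.exists_right_inv
  have hright : diagonal p * (C * Y * B) = 1 := by
    rw [Matrix.mul_assoc, Matrix.mul_assoc, mul_eq_one_comm_of_card_eq _ _ _ hcard] at hY
    simpa only [Matrix.mul_assoc] using hY
  have hdiag : IsUnit (diagonal p) := IsUnit.of_mul_eq_one _ hright
  exact Pi.isUnit_iff.mp (isUnit_diagonal.mp hdiag) i

end CommRing

theorem diagonal_one_add {n R : Type*} [DecidableEq n] [AddMonoidWithOne R] (d : n → R) :
    diagonal (1 + d) = 1 + diagonal d := by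
  rw [← diagonal_one, diagonal_add]
  rfl

section Diagonal

variable {m ι κ R : Type*} [Fintype ι] [DecidableEq ι] [Fintype κ] [DecidableEq κ]

theorem fromCols_mul_diagonal_mul_transpose [Semiring R] (V : Matrix m ι R) (W : Matrix m κ R)
    (a : ι → R) (b : κ → R) :
    fromCols V W * diagonal (Sum.elim a b) * (fromCols V W)ᵀ =
      V * diagonal a * Vᵀ + W * diagonal b * Wᵀ := by
  rw [← fromBlocks_diagonal, fromCols_mul_fromBlocks, transpose_fromCols, fromCols_mul_fromRows]
  simp only [Matrix.mul_zero, add_zero, zero_add]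

variable [DecidableEq m] {V : Matrix m ι R} {W : Matrix m κ R}

theorem one_add_eq_fromCols_mul_diagonal [Semiring R] (hcomplete : V * Vᵀ + W * Wᵀ = 1)
    (d : ι → R) (t : κ → R) :
    1 + (V * diagonal d * Vᵀ + W * diagonal t * Wᵀ) =
      fromCols V W * diagonal (Sum.elim (1 + d) (1 + t)) * (fromCols V W)ᵀ := by
  rw [fromCols_mul_diagonal_mul_transpose, diagonal_one_add, diagonal_one_add, ← hcomplete]
  simp only [Matrix.mul_add, Matrix.add_mul, Matrix.mul_one]
  abel

theorem smul_one_sub_add_eq_fromCols_mul_diagonal [CommRing R] (hcomplete : V * Vᵀ + W * Wᵀ = 1)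
    (d : ι → R) (α : R) :
    α • (1 - V * Vᵀ) + V * (1 + diagonal d) * Vᵀ =
      fromCols V W * diagonal (Sum.elim (1 + d) (Function.const κ α)) * (fromCols V W)ᵀ := by
  have hconst : diagonal (Function.const κ α) = α • 1 := (smul_one_eq_diagonal α).symm
  rw [fromCols_mul_diagonal_mul_transpose, diagonal_one_add, hconst, ← hcomplete,
    add_sub_cancel_left, Matrix.mul_smul, Matrix.smul_mul, Matrix.mul_one, add_comm]

end Diagonal

section Field

variable {m n ι κ K : Type*} [Fintype m] [DecidableEq m] [Fintype n] [DecidableEq n]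
  [Fintype ι] [DecidableEq ι] [Fintype κ] [DecidableEq κ] [Field K]

theorem spectrum_inv_mul_mul_inv_of_mul_self_eq (hcard : Fintype.card m = Fintype.card n)
    {S : Matrix m m K} (hS : IsUnit S) {B : Matrix m n K} {C : Matrix n m K} {p : n → K}
    (hSS : S * S = B * diagonal p * C) (q : n → K) :
    spectrum K (S⁻¹ * (B * diagonal q * C) * S⁻¹) = Set.range (q / p) := by
  have hp (i : n) : p i ≠ 0 :=
    (isUnit_apply_of_isUnit_mul_diagonal_mul hcard (hSS ▸ hS.mul hS) i).ne_zero
  have hSdet : IsUnit S.det := (isUnit_iff_isUnit_det S).mp hS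
  have hone : S⁻¹ * B * (diagonal p * C * S⁻¹) = 1 :=
    calc S⁻¹ * B * (diagonal p * C * S⁻¹)
      _ = S⁻¹ * (B * diagonal p * C) * S⁻¹ := by simp only [Matrix.mul_assoc]
      _ = S⁻¹ * (S * S) * S⁻¹ := by rw [hSS]
      _ = 1 := by rw [nonsing_inv_mul_cancel_left _ _ hSdet, mul_nonsing_inv _ hSdet]
  have hdiag : diagonal (q / p) * diagonal p = diagonal q := by
    rw [diagonal_mul_diagonal]
    exact congrArg diagonal (funext fun i => div_mul_cancel₀ (q i) (hp i))
  have hconj : S⁻¹ * (B * diagonal q * C) * S⁻¹ =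
      S⁻¹ * B * diagonal (q / p) * (diagonal p * C * S⁻¹) := by
    simp only [← hdiag, Matrix.mul_assoc]
  rw [hconj, spectrum_conj_of_mul_eq_one hone ((mul_eq_one_comm_of_card_eq _ _ _ hcard).mp hone),
    spectrum_diagonal]

theorem spectrum_preconditioned [Nonempty ι]
    (hcard : Fintype.card m = Fintype.card ι + Fintype.card κ)
    {Q S : Matrix m m K} (hS : IsUnit S) {V : Matrix m ι K} {W : Matrix m κ K}
    (hcomplete : V * Vᵀ + W * Wᵀ = 1) {d : ι → K} {α : K}
    (hSS : S * S = Q * (α • (1 - V * Vᵀ) + V * (1 + diagonal d) * Vᵀ) * Qᵀ) (t : κ → K) :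
    spectrum K (S⁻¹ * (Q * (1 + (V * diagonal d * Vᵀ + W * diagonal t * Wᵀ)) * Qᵀ) * S⁻¹) =
      insert 1 (Set.range fun j => (1 + t j) / α) := by
  have hassoc (p : ι ⊕ κ → K) : Q * (fromCols V W * diagonal p * (fromCols V W)ᵀ) * Qᵀ =
      Q * fromCols V W * diagonal p * ((fromCols V W)ᵀ * Qᵀ) := by
    simp only [Matrix.mul_assoc]
  have hcard' : Fintype.card m = Fintype.card (ι ⊕ κ) := by rw [hcard, Fintype.card_sum]
  rw [smul_one_sub_add_eq_fromCols_mul_diagonal hcomplete, hassoc] at hSS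
  have hd (i : ι) : (1 + d) i ≠ 0 :=
    (isUnit_apply_of_isUnit_mul_diagonal_mul hcard' (hSS ▸ hS.mul hS) (Sum.inl i)).ne_zero
  rw [one_add_eq_fromCols_mul_diagonal hcomplete, hassoc,
    spectrum_inv_mul_mul_inv_of_mul_self_eq hcard' hS hSS, range_sumElim_div_sumElim hd]
  rfl

theorem stmt_12_general [LinearOrder K] [IsStrictOrderedRing K] [Nonempty ι]
    (hcard : Fintype.card m = Fintype.card ι + Fintype.card κ)
    {Q S : Matrix m m K} (hS : IsUnit S) {V : Matrix m ι K} {W : Matrix m κ K}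
    (hcomplete : V * Vᵀ + W * Wᵀ = 1) {d : ι → K} {t : κ → K} {α : K} (hα : 0 < α)
    (hSS : S * S = Q * (α • (1 - V * Vᵀ) + V * (1 + diagonal d) * Vᵀ) * Qᵀ) {l1 ln : K}
    (hl1 : IsGreatest (Set.range fun j => 1 + t j) l1)
    (hln : IsLeast (Set.range fun j => 1 + t j) ln) :
    let M := S⁻¹ * (Q * (1 + (V * diagonal d * Vᵀ + W * diagonal t * Wᵀ)) * Qᵀ) * S⁻¹
    IsGreatest (spectrum K M) (max 1 (l1 / α)) ∧ IsLeast (spectrum K M) (min 1 (ln / α)) := by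
  intro M
  have hmono : Monotone fun x : K => x / α := fun _ _ h => div_le_div_of_nonneg_right h hα.le
  have hspec : spectrum K M = insert 1 ((· / α) '' Set.range fun j => 1 + t j) := by
    rw [← Set.range_comp']
    exact spectrum_preconditioned hcard hS hcomplete hSS t
  rw [hspec]
  exact ⟨(hmono.map_isGreatest hl1).insert 1, (hmono.map_isLeast hln).insert 1⟩

end Field

/-- with `λ₁ = max_i (1+Θ_{ii})` and `λ_n = min_i (1+Θ_{ii})`, for
every `α > 0`, `κ₂(M_α) = max(1, λ₁/α) / min(1, λ_n/α)`. -/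
theorem stmt_12 (n r : ℕ) (hr : 1 ≤ r) (hrn : r < n)
    (Q E : Matrix (Fin n) (Fin n) ℝ) (hQ : IsUnit Q.det) (hEsymm : E.IsSymm)
    (hEpd : (1 + E).PosDef)
    (V : Matrix (Fin n) (Fin r) ℝ) (W : Matrix (Fin n) (Fin (n - r)) ℝ)
    (hV : Vᵀ * V = 1) (hW : Wᵀ * W = 1) (hVW : Vᵀ * W = 0)
    (hcomplete : V * Vᵀ + W * Wᵀ = 1)
    (d : Fin r → ℝ) (t : Fin (n - r) → ℝ)
    (hE : E = V * diagonal d * Vᵀ + W * diagonal t * Wᵀ)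
    (A : Matrix (Fin n) (Fin n) ℝ) (hA : A = Q * (1 + E) * Qᵀ)
    (P : ℝ → Matrix (Fin n) (Fin n) ℝ)
    (hP : ∀ α : ℝ, P α = Q * (α • (1 - V * Vᵀ) + V * (1 + diagonal d) * Vᵀ) * Qᵀ)
    (S : ℝ → Matrix (Fin n) (Fin n) ℝ)
    (hS : ∀ α : ℝ, 0 < α → (S α).PosDef ∧ S α * S α = P α)
    (M : ℝ → Matrix (Fin n) (Fin n) ℝ)
    (hM : ∀ α : ℝ, M α = (S α)⁻¹ * A * (S α)⁻¹)
    (l1 ln : ℝ)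
    (hl1 : IsGreatest {x : ℝ | ∃ i, x = 1 + t i} l1)
    (hln : IsLeast {x : ℝ | ∃ i, x = 1 + t i} ln) :
    ∀ α : ℝ, 0 < α → kappa2 (M α) = max 1 (l1 / α) / min 1 (ln / α) := by
  intro α hα
  subst hE hA
  obtain ⟨hSpos, hSS⟩ := hS α hα
  have : Nonempty (Fin r) := ⟨⟨0, hr⟩⟩
  have hrange : {x : ℝ | ∃ i, x = 1 + t i} = Set.range fun i => 1 + t i := by
    simp only [Set.range, eq_comm]
  rw [hrange] at hl1 hln
  obtain ⟨hmax, hmin⟩ := stmt_12_general (by simp only [Fintype.card_fin]; lia) hSpos.isUnit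
    hcomplete hα (hSS.trans (hP α)) hl1 hln
  rw [kappa2, hM, hmax.csSup_eq, hmin.csInf_eq]
end

section
/- Let n ≥ 1, let A be an n×n real symmetric positive definite matrix, and let C be a nonempty set of n×n real symmetric positive definite matrices that is a cone, i.e. c·P ∈ C whenever P ∈ C and c > 0. Then inf { D_LD(A,P) : P ∈ C } = inf { ln K(P⁻¹·A) : P ∈ C } (both infima taken in ℝ; both sets are bounded below by 0). -/
open Matrix

/-!
Put `M = P⁻¹ * A`. The inequality `log x ≤ x - 1` at `x = trace M / n` gives
`log (Kap M) ≤ DLD A P`, with equality when `trace M = n`. Replacing `P` by `c • P` leaves `Kap M`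
unchanged and divides `trace M` by `c`, so on every ray of the cone the choice `c = trace M / n`
attains equality.
-/

open scoped MatrixOrder ComplexOrder in
theorem trace_mul_pos_of_posDef {ι 𝕜 : Type*} [Fintype ι] [Nonempty ι] [RCLike 𝕜]
    {A B : Matrix ι ι 𝕜} (hA : A.PosDef) (hB : B.PosDef) : 0 < (A * B).trace := by
  classical
  obtain ⟨S, hS, rfl⟩ :=
    CStarAlgebra.isStrictlyPositive_iff_eq_star_mul_self.mp hB.isStrictlyPositive
  have trace_conj : (A * (star S * S)).trace = (S * A * star S).trace := by
    rw [← mul_assoc, trace_mul_comm, mul_assoc]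
  rw [trace_conj]
  exact (hS.posDef_star_right_conjugate_iff.mpr hA).trace_pos

theorem inv_smul_of_ne_zero {ι K : Type*} [Fintype ι] [DecidableEq ι] [Field K]
    {c : K} (hc : c ≠ 0) {P : Matrix ι ι K} (hP : P.det ≠ 0) : (c • P)⁻¹ = c⁻¹ • P⁻¹ :=
  inv_smul' (A := P) (Units.mk0 c hc) hP.isUnit

section

variable {n : ℕ} {A P M : Matrix (Fin n) (Fin n) ℝ}

theorem Kap_smul {c : ℝ} (hc : c ≠ 0) (M : Matrix (Fin n) (Fin n) ℝ) : Kap (c • M) = Kap M := by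
  rw [Kap, trace_smul, det_smul, Fintype.card_fin, smul_eq_mul, mul_div_assoc, mul_pow,
    mul_div_mul_left _ _ (pow_ne_zero n hc), Kap]

theorem ne_zero_of_trace_ne_zero (htr : M.trace ≠ 0) : n ≠ 0 := by
  rintro rfl
  exact htr M.trace_fin_zero

theorem log_Kap (htr : M.trace ≠ 0) (hdet : M.det ≠ 0) :
    Real.log (Kap M) = n * Real.log (M.trace / n) - Real.log M.det := by
  have hn : (n : ℝ) ≠ 0 := Nat.cast_ne_zero.mpr (ne_zero_of_trace_ne_zero htr)
  rw [Kap, Real.log_div (pow_ne_zero n (div_ne_zero htr hn)) hdet, Real.log_pow]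

theorem DLD_eq_trace_inv_mul (A P : Matrix (Fin n) (Fin n) ℝ) :
    DLD A P = (P⁻¹ * A).trace - Real.log (P⁻¹ * A).det - n := by
  rw [DLD, trace_mul_comm, det_mul_comm]

theorem log_Kap_le_DLD (htr : 0 < (P⁻¹ * A).trace) (hdet : (P⁻¹ * A).det ≠ 0) :
    Real.log (Kap (P⁻¹ * A)) ≤ DLD A P := by
  set t := (P⁻¹ * A).trace
  have hn : (0 : ℝ) < n :=
    Nat.cast_pos.mpr (Nat.pos_of_ne_zero (ne_zero_of_trace_ne_zero htr.ne'))
  have log_le : n * Real.log (t / n) ≤ t - n :=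
    calc n * Real.log (t / n) ≤ n * (t / n - 1) := by
          gcongr
          exact Real.log_le_sub_one_of_pos (div_pos htr hn)
      _ = t - n := by field_simp
  rw [log_Kap htr.ne' hdet, DLD_eq_trace_inv_mul]
  linarith

theorem DLD_eq_log_Kap_of_trace_eq (htr : (P⁻¹ * A).trace = n) :
    DLD A P = Real.log (Kap (P⁻¹ * A)) := by
  have div_pow_self : ((n : ℝ) / n) ^ n = 1 := by
    rcases eq_or_ne n 0 with rfl | hn
    · exact pow_zero _
    · rw [div_self (Nat.cast_ne_zero.mpr hn), one_pow]
  rw [DLD_eq_trace_inv_mul, Kap, htr, div_pow_self, one_div, Real.log_inv]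
  ring

theorem exists_pos_DLD_smul_eq_log_Kap (hP : P.det ≠ 0) (htr : 0 < (P⁻¹ * A).trace) :
    ∃ c : ℝ, 0 < c ∧ DLD A (c • P) = Real.log (Kap (P⁻¹ * A)) := by
  set t := (P⁻¹ * A).trace with ht
  have hn : (0 : ℝ) < n :=
    Nat.cast_pos.mpr (Nat.pos_of_ne_zero (ne_zero_of_trace_ne_zero htr.ne'))
  have hc : 0 < t / n := div_pos htr hn
  have inv_smul_mul : ((t / n) • P)⁻¹ * A = (t / n)⁻¹ • (P⁻¹ * A) := by
    rw [inv_smul_of_ne_zero hc.ne' hP, smul_mul]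
  have trace_eq : (((t / n) • P)⁻¹ * A).trace = n := by
    rw [inv_smul_mul, trace_smul, ← ht, smul_eq_mul]
    field_simp
  refine ⟨t / n, hc, ?_⟩
  rw [DLD_eq_log_Kap_of_trace_eq trace_eq, inv_smul_mul, Kap_smul (inv_ne_zero hc.ne')]

end

/-- over a nonempty cone of symmetric positive definite matrices,
the infimum of the Bregman divergence equals the infimum of the log Kaporin
condition number. -/
theorem stmt_14 (n : ℕ) (hn : 1 ≤ n) (A : Matrix (Fin n) (Fin n) ℝ) (hA : A.PosDef)
    (C : Set (Matrix (Fin n) (Fin n) ℝ)) (hCne : C.Nonempty)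
    (hCpd : ∀ P ∈ C, P.PosDef)
    (hCcone : ∀ P ∈ C, ∀ c : ℝ, 0 < c → c • P ∈ C) :
    sInf ((fun P => DLD A P) '' C) = sInf ((fun P => Real.log (Kap (P⁻¹ * A))) '' C) := by
  have : Nonempty (Fin n) := ⟨⟨0, hn⟩⟩
  have trace_pos : ∀ P ∈ C, 0 < (P⁻¹ * A).trace := fun P hP =>
    trace_mul_pos_of_posDef (hCpd P hP).inv hA
  apply csInf_eq_csInf_of_forall_exists_le
  · rintro _ ⟨P, hP, rfl⟩
    have det_ne_zero : (P⁻¹ * A).det ≠ 0 := by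
      rw [det_mul]
      exact mul_ne_zero (hCpd P hP).inv.det_pos.ne' hA.det_pos.ne'
    exact ⟨_, ⟨P, hP, rfl⟩, log_Kap_le_DLD (trace_pos P hP) det_ne_zero⟩
  · rintro _ ⟨P, hP, rfl⟩
    obtain ⟨c, hc, hDLD⟩ :=
      exists_pos_DLD_smul_eq_log_Kap (hCpd P hP).det_pos.ne' (trace_pos P hP)
    exact ⟨_, ⟨c • P, hCcone P hP c hc, rfl⟩, hDLD.le⟩
end

section
/- Let n ≥ 1, let A be an n×n real symmetric positive definite matrix, and let C be a set of n×n real symmetric positive definite matrices that is a cone, i.e. c·P ∈ C whenever P ∈ C and c > 0. If P ∈ C satisfies D_LD(A,P) ≤ D_LD(A,R) for all R ∈ C, then trace(P⁻¹·A) = n. -/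
open Matrix

section Ray

variable {n : ℕ} {A P : Matrix (Fin n) (Fin n) ℝ} {c : ℝ}

theorem DLD_smul_right (hAP : (A * P⁻¹).det ≠ 0) (hc : c ≠ 0) :
    DLD A (c • P) = c⁻¹ * (A * P⁻¹).trace + n * Real.log c - Real.log (A * P⁻¹).det - n := by
  have hP : IsUnit P.det := by
    rw [det_mul] at hAP
    exact isUnit_nonsing_inv_det_iff.mp (right_ne_zero_of_mul hAP).isUnit
  have hinv : (c • P)⁻¹ = c⁻¹ • P⁻¹ := inv_smul' P (Units.mk0 c hc) hP
  have hlog : Real.log (A * (c • P)⁻¹).det = Real.log (A * P⁻¹).det - n * Real.log c := by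
    rw [hinv, Matrix.mul_smul, det_smul, Fintype.card_fin,
      Real.log_mul (pow_ne_zero n (inv_ne_zero hc)) hAP, Real.log_pow, Real.log_inv]
    ring
  rw [DLD, hlog, hinv, Matrix.mul_smul, trace_smul, smul_eq_mul]
  ring

theorem hasDerivAt_DLD_smul_right (hAP : (A * P⁻¹).det ≠ 0) (hc : c ≠ 0) :
    HasDerivAt (fun t : ℝ => DLD A (t • P)) (n / c - (A * P⁻¹).trace / c ^ 2) c := by
  have hformula : (fun t : ℝ => DLD A (t • P)) =ᶠ[nhds c] fun t =>
      t⁻¹ * (A * P⁻¹).trace + n * Real.log t - Real.log (A * P⁻¹).det - n := by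
    filter_upwards [isOpen_ne.mem_nhds hc] with t ht using DLD_smul_right hAP ht
  have htrace := (hasDerivAt_inv hc).mul_const (A * P⁻¹).trace
  have hlog := (Real.hasDerivAt_log hc).const_mul (n : ℝ)
  have hderiv := ((htrace.add hlog).sub_const (Real.log (A * P⁻¹).det)).sub_const (n : ℝ)
  exact (hderiv.congr_of_eventuallyEq hformula).congr_deriv (by ring)

end Ray

theorem stmt_17_general {n : ℕ} {A P : Matrix (Fin n) (Fin n) ℝ} (hAP : 0 < (A * P⁻¹).det)
    (hmin : IsLocalMin (fun c : ℝ => DLD A (c • P)) 1) : (P⁻¹ * A).trace = n := by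
  have hcrit := hmin.hasDerivAt_eq_zero (hasDerivAt_DLD_smul_right hAP.ne' one_ne_zero)
  rw [trace_mul_comm]
  linarith

/-- any minimiser of the Bregman divergence over a cone of symmetric
positive definite matrices satisfies `trace(P⁻¹·A) = n`. -/
theorem stmt_17 (n : ℕ) (hn : 1 ≤ n) (A : Matrix (Fin n) (Fin n) ℝ) (hA : A.PosDef)
    (C : Set (Matrix (Fin n) (Fin n) ℝ))
    (hCpd : ∀ P ∈ C, P.PosDef)
    (hCcone : ∀ P ∈ C, ∀ c : ℝ, 0 < c → c • P ∈ C)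
    (P : Matrix (Fin n) (Fin n) ℝ) (hP : P ∈ C)
    (hmin : ∀ R ∈ C, DLD A P ≤ DLD A R) :
    (P⁻¹ * A).trace = n := by
  have hAP : 0 < (A * P⁻¹).det := det_mul A P⁻¹ ▸ mul_pos hA.det_pos (hCpd P hP).inv.det_pos
  refine stmt_17_general hAP ?_
  filter_upwards [lt_mem_nhds one_pos] with c hc
  simpa only [one_smul] using hmin _ (hCcone P hP c hc)
end
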